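/- For every Greedy-Commit process (i.e., for every choice of maximum-weight matching in each round), every online algorithm ALG, and all nonnegative round weights w_1, …, w_T, the expected reward of Greedy-Commit is at least 0.43 times the expected reward of ALG. -/

import Mathlib

open Finset

/-- A finite simple graph presented via an abstract edge type: each edge has a
set of exactly two endpoints, and distinct edges have distinct endpoint sets. -/
structure GraphEdges (V E : Type) where
  ends : E → Finset V
  card_ends : ∀ e, (ends e).card = 2
  ends_injective : Function.Injective ends

variable {V E : Type}

/-- A matching: a set of pairwise endpoint-disjoint edges. -/
def GraphEdges.IsMatching (G : GraphEdges V E) (M : Finset E) : Prop :=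
  ∀ e ∈ M, ∀ f ∈ M, e ≠ f → Disjoint (G.ends e) (G.ends f)

/-- `select` is an online algorithm: under each realization `ω` it selects a
matching in every round, and its round-`t` selection depends only on its own
selections in earlier rounds and on the realized values of the edges it
selected in those rounds. -/
def GraphEdges.IsOnline (G : GraphEdges V E) (select : (E → Bool) → ℕ → Finset E) : Prop :=
  (∀ ω t, G.IsMatching (select ω t)) ∧
  (∀ ω ω' t, (∀ s, s < t → ∀ e ∈ select ω s, ω' e = ω e) → select ω' t = select ω t)

/-- Probability of the sample graph `ω` under independent Bernoulli edges. -/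
def probOf [Fintype E] (p : E → ℝ) (ω : E → Bool) : ℝ :=
  ∏ e : E, if ω e then p e else 1 - p e

/-- Expected reward of an algorithm: the `w`-weighted expected number of
successful selected edges over rounds `0, …, T-1`. -/
noncomputable def expectedReward [Fintype E] [DecidableEq E] (p : E → ℝ) (w : ℕ → ℝ)
    (T : ℕ) (select : (E → Bool) → ℕ → Finset E) : ℝ :=
  ∑ ω : E → Bool, probOf p ω *
    ∑ t ∈ Finset.range T, w t * ((select ω t).filter (fun e => ω e)).card

/-- Edges selected by `select` in rounds before `t` under realization `ω`. -/
def selectedBefore [DecidableEq E] (select : (E → Bool) → ℕ → Finset E)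
    (ω : E → Bool) (t : ℕ) : Finset E :=
  (Finset.range t).biUnion (select ω)

/-- `select` is a Greedy-Commit process: an online algorithm which in each
round keeps all previously selected successful edges `A`, and augments them
with a matching, among edges having no endpoint covered by `A`, of maximum
total weight where previously revealed unsuccessful edges have weight `0` and
all other edges `e` have weight `p e`. -/
def GraphEdges.IsGreedyCommit [DecidableEq E] (G : GraphEdges V E) (p : E → ℝ)
    (select : (E → Bool) → ℕ → Finset E) : Prop :=
  G.IsOnline select ∧
  ∀ ω t,
    ∃ M : Finset E,
      G.IsMatching M ∧
      (∀ e ∈ M, ∀ a ∈ (selectedBefore select ω t).filter (fun e => ω e),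
        Disjoint (G.ends e) (G.ends a)) ∧
      (∀ M' : Finset E, G.IsMatching M' →
        (∀ e ∈ M', ∀ a ∈ (selectedBefore select ω t).filter (fun e => ω e),
          Disjoint (G.ends e) (G.ends a)) →
        ∑ e ∈ M', (if e ∈ (selectedBefore select ω t).filter (fun e => ¬ ω e) then 0 else p e)
          ≤ ∑ e ∈ M, (if e ∈ (selectedBefore select ω t).filter (fun e => ¬ ω e) then 0 else p e)) ∧
      select ω t = (selectedBefore select ω t).filter (fun e => ω e) ∪ M

/-! Fix a round `τ` and let `g t` be the expected number of successes that Greedy-Commit has found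
before round `t`. A successful edge of the matching that the competitor selects in round `τ` either
touches one of the Greedy-Commit successes found before round `t`, which happens at most twice per
success, or could still be tried by Greedy-Commit in round `t`. Edges of the second kind are split
by the round `s ≤ τ` in which the competitor first selected them. When an edge is selected for the
first time its outcome is still independent of the history, so each part has expected number of
successes equal to its expected weight, and by maximality this is at most the expected gain
`g (t + 1) - g t`. Hence `O ≤ 2 * g t + (τ + 1) * (g (t + 1) - g t)`, where `O` is the expected
reward of the competitor in round `τ`. So `O - 2 * g t` contracts by the factor `1 - 2 / (τ + 1)`
per step, and `2 * g (τ + 1) ≥ (1 - exp (-2)) * O`. Greedy-Commit collects `g (τ + 1)` in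
round `τ`. -/

section Expectation

variable [Fintype E]

theorem probOf_nonneg {p : E → ℝ} (hp : ∀ e, 0 ≤ p e ∧ p e ≤ 1) (ω : E → Bool) :
    0 ≤ probOf p ω := by
  refine prod_nonneg fun e _ => ?_
  split_ifs
  · exact (hp e).1
  · exact sub_nonneg.mpr (hp e).2

variable [DecidableEq E]

theorem probOf_update (p : E → ℝ) (ω : E → Bool) (e : E) (b : Bool) :
    probOf p (Function.update ω e b) =
      (if b then p e else 1 - p e) * ∏ x ∈ univ.erase e, if ω x then p x else 1 - p x := by
  rw [probOf, ← mul_prod_erase univ _ (mem_univ e), Function.update_self]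
  congr 1
  refine prod_congr rfl fun x hx => ?_
  rw [Function.update_of_ne (ne_of_mem_erase hx)]

/-- The expectation of a real random variable on the sample graphs, as a linear functional, so that
its linearity is available through `map_add`, `map_smul` and `map_sum`. -/
noncomputable def expectation (p : E → ℝ) : ((E → Bool) → ℝ) →ₗ[ℝ] ℝ :=
  Fintype.linearCombination ℝ (probOf p)

theorem expectation_apply (p : E → ℝ) (f : (E → Bool) → ℝ) :
    expectation p f = ∑ ω, probOf p ω * f ω := by
  simp only [expectation, Fintype.linearCombination_apply, smul_eq_mul, mul_comm]

theorem expectation_mono {p : E → ℝ} (hp : ∀ e, 0 ≤ p e ∧ p e ≤ 1) : Monotone (expectation p) := by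
  intro f g hfg
  simp only [expectation_apply]
  exact sum_le_sum fun ω _ => mul_le_mul_of_nonneg_left (hfg ω) (probOf_nonneg hp ω)

theorem expectation_nonneg {p : E → ℝ} (hp : ∀ e, 0 ≤ p e ∧ p e ≤ 1) {f : (E → Bool) → ℝ}
    (hf : 0 ≤ f) : 0 ≤ expectation p f :=
  (map_zero (expectation p)).symm.trans_le (expectation_mono hp hf)

theorem expectation_centered_mul_eq_zero (p : E → ℝ) (e : E) {f : (E → Bool) → ℝ}
    (hf : ∀ ω b, f (Function.update ω e b) = f ω) :
    expectation p (fun ω => ((if ω e then 1 else 0) - p e) * f ω) = 0 := by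
  rw [expectation_apply]
  -- Flipping the outcome of `e` pairs the sample graphs so that the two terms of a pair cancel.
  refine sum_involution (fun ω _ => Function.update ω e (!ω e)) (fun ω _ => ?_)
    (fun ω _ _ h => ?_) (fun _ _ => mem_univ _) (fun ω _ => by simp)
  · have hω := probOf_update p ω e (ω e)
    rw [Function.update_eq_self] at hω
    rw [hf, hω, probOf_update, Function.update_self]
    cases ω e <;>
      simp only [Bool.not_false, Bool.not_true, Bool.false_eq_true, if_true, if_false] <;> ring
  · simpa using congrFun h e

end Expectation

section SuccessCount

/-- The number of successful edges in a random edge set `N`, as a real random variable. -/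
def successCount (N : (E → Bool) → Finset E) (ω : E → Bool) : ℝ :=
  #{e ∈ N ω | ω e}

theorem successCount_nonneg (N : (E → Bool) → Finset E) : 0 ≤ successCount N :=
  fun _ => Nat.cast_nonneg _

variable [DecidableEq E]

/-- A random edge set is nonanticipating if the membership of each edge `e` does not depend on the
outcome of `e`. One implication suffices, since resetting the outcome of `e` gives the other. -/
def IsNonanticipating (N : (E → Bool) → Finset E) : Prop :=
  ∀ ω e b, e ∈ N ω → e ∈ N (Function.update ω e b)

theorem IsNonanticipating.mem_update_iff {N : (E → Bool) → Finset E} (hN : IsNonanticipating N)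
    (ω : E → Bool) (e : E) (b : Bool) : e ∈ N (Function.update ω e b) ↔ e ∈ N ω :=
  ⟨fun h => by simpa using hN _ e (ω e) h, hN ω e b⟩

theorem successCount_sub_sum_eq [Fintype E] (p : E → ℝ) (N : (E → Bool) → Finset E) :
    (successCount N - fun ω => ∑ e ∈ N ω, p e) =
      ∑ e, fun ω => ((if ω e then 1 else 0) - p e) * if e ∈ N ω then 1 else 0 := by
  ext ω
  simp [successCount, Finset.sum_apply, sum_sub_distrib]

theorem IsNonanticipating.expectation_successCount [Fintype E] {N : (E → Bool) → Finset E}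
    (hN : IsNonanticipating N) (p : E → ℝ) :
    expectation p (successCount N) = expectation p fun ω => ∑ e ∈ N ω, p e := by
  rw [← sub_eq_zero, ← map_sub, successCount_sub_sum_eq, map_sum]
  refine sum_eq_zero fun e _ => expectation_centered_mul_eq_zero p e fun ω b => ?_
  simp only [hN.mem_update_iff]

end SuccessCount

namespace GraphEdges

variable {G : GraphEdges V E}

theorem IsMatching.subset {M N : Finset E} (hM : G.IsMatching M) (h : N ⊆ M) :
    G.IsMatching N :=
  fun e he f hf => hM e (h he) f (h hf)

theorem not_disjoint_ends_self (G : GraphEdges V E) (e : E) :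
    ¬ Disjoint (G.ends e) (G.ends e) := by
  rw [disjoint_self_iff_empty, ← card_eq_zero, G.card_ends]
  exact two_ne_zero

theorem IsMatching.card_le_two_mul_card {M A : Finset E} (hM : G.IsMatching M)
    (hA : ∀ e ∈ M, ∃ a ∈ A, ¬ Disjoint (G.ends e) (G.ends a)) : #M ≤ 2 * #A := by
  classical
  have hdisj : (M : Set E).PairwiseDisjoint fun e => G.ends e ∩ A.biUnion G.ends :=
    fun e he f hf hef => (hM e he f hf hef).mono inter_subset_left inter_subset_left
  have hne : ∀ e ∈ M, (G.ends e ∩ A.biUnion G.ends).Nonempty := by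
    intro e he
    obtain ⟨a, ha, hea⟩ := hA e he
    obtain ⟨v, hve, hva⟩ := not_disjoint_iff.mp hea
    exact ⟨v, mem_inter.mpr ⟨hve, mem_biUnion.mpr ⟨a, ha, hva⟩⟩⟩
  calc #M ≤ #(M.biUnion fun e => G.ends e ∩ A.biUnion G.ends) := card_le_card_biUnion hdisj hne
    _ ≤ #(A.biUnion G.ends) := card_le_card (biUnion_subset.mpr fun _ _ => inter_subset_right)
    _ ≤ #A * 2 := card_biUnion_le_card_mul _ _ _ fun a _ => (G.card_ends a).le
    _ = 2 * #A := mul_comm _ _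

end GraphEdges

section Algorithms

variable [DecidableEq E]

/-- The edges found successful by `select` in rounds before `t`: the set called `A_t` in the
description of Greedy-Commit. -/
def successesBefore (select : (E → Bool) → ℕ → Finset E) (ω : E → Bool) (t : ℕ) : Finset E :=
  {e ∈ selectedBefore select ω t | ω e}

/-- The edges that `select` selects in round `t` for the first time. -/
def newlySelected (select : (E → Bool) → ℕ → Finset E) (t : ℕ) (ω : E → Bool) : Finset E :=
  select ω t \ selectedBefore select ω t

theorem selectedBefore_succ (select : (E → Bool) → ℕ → Finset E) (ω : E → Bool) (t : ℕ) :
    selectedBefore select ω (t + 1) = selectedBefore select ω t ∪ newlySelected select t ω := by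
  rw [newlySelected, union_sdiff_self_eq_union, selectedBefore, range_add_one, biUnion_insert,
    union_comm, selectedBefore]

theorem mem_newlySelected_find {select : (E → Bool) → ℕ → Finset E} {ω : E → Bool} {e : E}
    (h : ∃ s, e ∈ select ω s) : e ∈ newlySelected select (Nat.find h) ω := by
  refine mem_sdiff.mpr ⟨Nat.find_spec h, fun hb => ?_⟩
  obtain ⟨s, hs, hes⟩ := mem_biUnion.mp hb
  exact Nat.find_min h (mem_range.mp hs) hes

theorem successCount_selectedBefore_succ (select : (E → Bool) → ℕ → Finset E) (t : ℕ) :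
    successCount (selectedBefore select · (t + 1)) =
      successCount (selectedBefore select · t) + successCount (newlySelected select t) := by
  ext ω
  have hdisj : Disjoint (selectedBefore select ω t) (newlySelected select t ω) := disjoint_sdiff
  simp only [successCount, selectedBefore_succ, filter_union, Pi.add_apply,
    card_union_of_disjoint (disjoint_filter_filter hdisj), Nat.cast_add]

variable {G : GraphEdges V E} {select : (E → Bool) → ℕ → Finset E}

namespace GraphEdges.IsOnline

theorem select_update (h : G.IsOnline select) {ω : E → Bool} {t : ℕ} {e : E}
    (he : e ∉ selectedBefore select ω t) (b : Bool) {s : ℕ} (hs : s ≤ t) :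
    select (Function.update ω e b) s = select ω s := by
  refine h.2 ω _ s fun r hr x hx => Function.update_of_ne ?_ _ _
  rintro rfl
  exact he (mem_biUnion.mpr ⟨r, mem_range.mpr (hr.trans_le hs), hx⟩)

theorem selectedBefore_update (h : G.IsOnline select) {ω : E → Bool} {t : ℕ} {e : E}
    (he : e ∉ selectedBefore select ω t) (b : Bool) :
    selectedBefore select (Function.update ω e b) t = selectedBefore select ω t :=
  biUnion_congr rfl fun _ hs => h.select_update he b (mem_range.mp hs).le

theorem successesBefore_update (h : G.IsOnline select) {ω : E → Bool} {t : ℕ} {e : E}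
    (he : e ∉ selectedBefore select ω t) (b : Bool) :
    successesBefore select (Function.update ω e b) t = successesBefore select ω t := by
  rw [successesBefore, h.selectedBefore_update he]
  refine filter_congr fun x hx => ?_
  rw [Function.update_of_ne (ne_of_mem_of_not_mem hx he)]

theorem isNonanticipating_newlySelected (h : G.IsOnline select) (t : ℕ) :
    IsNonanticipating (newlySelected select t) := by
  intro ω e b he
  have hnew := (mem_sdiff.mp he).2
  rwa [newlySelected, h.select_update hnew b le_rfl, h.selectedBefore_update hnew]

end GraphEdges.IsOnline

/-- The edge `e` is available to `select` in round `t` if it has not been selected before and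
touches none of the successes found so far. -/
def GraphEdges.IsAvailable (G : GraphEdges V E) (select : (E → Bool) → ℕ → Finset E)
    (ω : E → Bool) (t : ℕ) (e : E) : Prop :=
  e ∉ selectedBefore select ω t ∧
    ∀ a ∈ successesBefore select ω t, Disjoint (G.ends e) (G.ends a)

theorem GraphEdges.IsOnline.isAvailable_update (h : G.IsOnline select) {ω : E → Bool} {t : ℕ}
    {e : E} (he : G.IsAvailable select ω t e) (b : Bool) :
    G.IsAvailable select (Function.update ω e b) t e := by
  rwa [GraphEdges.IsAvailable, h.selectedBefore_update he.1, h.successesBefore_update he.1]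

open scoped Classical in
/-- The edges that `alg` selects in round `s` for the first time and that are available to `gc` in
round `t`. The rounds `s` and `t` are unrelated. -/
noncomputable def GraphEdges.availableNew (G : GraphEdges V E)
    (gc alg : (E → Bool) → ℕ → Finset E) (t s : ℕ) (ω : E → Bool) : Finset E :=
  {e ∈ newlySelected alg s ω | G.IsAvailable gc ω t e}

variable {gc alg : (E → Bool) → ℕ → Finset E}

theorem GraphEdges.mem_availableNew {t s : ℕ} {ω : E → Bool} {e : E} :
    e ∈ G.availableNew gc alg t s ω ↔ e ∈ newlySelected alg s ω ∧ G.IsAvailable gc ω t e := by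
  simp only [GraphEdges.availableNew, mem_filter]

theorem GraphEdges.IsOnline.isNonanticipating_availableNew (hgc : G.IsOnline gc)
    (halg : G.IsOnline alg) (t s : ℕ) : IsNonanticipating (G.availableNew gc alg t s) := by
  intro ω e b he
  obtain ⟨hnew, havail⟩ := GraphEdges.mem_availableNew.mp he
  exact GraphEdges.mem_availableNew.mpr
    ⟨halg.isNonanticipating_newlySelected s ω e b hnew, hgc.isAvailable_update havail b⟩

theorem GraphEdges.IsOnline.successCount_le (halg : G.IsOnline alg)
    (gc : (E → Bool) → ℕ → Finset E) (t τ : ℕ) :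
    successCount (alg · τ) ≤ (2 : ℝ) • successCount (selectedBefore gc · t) +
      ∑ s ∈ range (τ + 1), successCount (G.availableNew gc alg t s) := by
  classical
  intro ω
  let touches : E → Prop :=
    fun e => ∃ a ∈ successesBefore gc ω t, ¬ Disjoint (G.ends e) (G.ends a)
  let S : Finset E := {e ∈ alg ω τ | ω e}
  have htouching : #{e ∈ S | touches e} ≤ 2 * #(successesBefore gc ω t) :=
    ((halg.1 ω τ).subset ((filter_subset _ _).trans (filter_subset _ _))).card_le_two_mul_card
      fun e he => (mem_filter.mp he).2
  have hcover : {e ∈ S | ¬ touches e} ⊆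
      (range (τ + 1)).biUnion fun s => {e ∈ G.availableNew gc alg t s ω | ω e} := by
    intro e he
    obtain ⟨heS, hfree⟩ := mem_filter.mp he
    obtain ⟨hsel, hω⟩ := mem_filter.mp heS
    have hex : ∃ s, e ∈ alg ω s := ⟨τ, hsel⟩
    have hdisj : ∀ a ∈ successesBefore gc ω t, Disjoint (G.ends e) (G.ends a) := by
      simpa [touches] using hfree
    have hnew : e ∉ selectedBefore gc ω t := fun hb =>
      G.not_disjoint_ends_self e (hdisj e (mem_filter.mpr ⟨hb, hω⟩))
    exact mem_biUnion.mpr ⟨Nat.find hex, mem_range_succ_iff.mpr (Nat.find_min' hex hsel),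
      mem_filter.mpr
        ⟨GraphEdges.mem_availableNew.mpr ⟨mem_newlySelected_find hex, hnew, hdisj⟩, hω⟩⟩
  have hcard : #S ≤ 2 * #(successesBefore gc ω t) +
      ∑ s ∈ range (τ + 1), #{e ∈ G.availableNew gc alg t s ω | ω e} := by
    rw [← card_filter_add_card_filter_not touches]
    exact add_le_add htouching ((card_le_card hcover).trans card_biUnion_le)
  simp only [successCount, Pi.add_apply, Pi.smul_apply, Finset.sum_apply, smul_eq_mul]
  exact_mod_cast hcard

end Algorithms

namespace GraphEdges.IsGreedyCommit

variable [DecidableEq E] {G : GraphEdges V E} {p : E → ℝ} {gc alg : (E → Bool) → ℕ → Finset E}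

theorem successCount_eq (hgc : G.IsGreedyCommit p gc) (t : ℕ) :
    successCount (gc · t) = successCount (selectedBefore gc · (t + 1)) := by
  ext ω
  obtain ⟨M, -, -, -, hsel⟩ := hgc.2 ω t
  have hkept : successesBefore gc ω t ⊆ gc ω t := hsel ▸ subset_union_left
  have hsucc : {e ∈ gc ω t | ω e} = {e ∈ selectedBefore gc ω (t + 1) | ω e} := by
    ext e
    have := @hkept e
    simp only [successesBefore, selectedBefore_succ, newlySelected, mem_filter, mem_union,
      mem_sdiff] at this ⊢
    tauto
  rw [successCount, successCount, hsucc]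

theorem sum_le_sum_newlySelected (hgc : G.IsGreedyCommit p gc) (hp : ∀ e, 0 ≤ p e)
    {ω : E → Bool} {t : ℕ} {N : Finset E} (hN : G.IsMatching N)
    (havail : ∀ e ∈ N, G.IsAvailable gc ω t e) :
    ∑ e ∈ N, p e ≤ ∑ e ∈ newlySelected gc t ω, p e := by
  obtain ⟨M, -, hMfree, hmax, hsel⟩ := hgc.2 ω t
  set failed : Finset E := {e ∈ selectedBefore gc ω t | ¬ ω e}
  have hNfailed : ∀ e ∈ N, e ∉ failed := fun e he hf => (havail e he).1 (filter_subset _ _ hf)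
  have hMnew : {e ∈ M | e ∉ failed} ⊆ newlySelected gc t ω := by
    intro e he
    obtain ⟨heM, hef⟩ := mem_filter.mp he
    refine mem_sdiff.mpr ⟨hsel ▸ mem_union_right _ heM, fun hb => ?_⟩
    by_cases hω : ω e
    · exact G.not_disjoint_ends_self e (hMfree e heM e (mem_filter.mpr ⟨hb, hω⟩))
    · exact hef (mem_filter.mpr ⟨hb, hω⟩)
  calc ∑ e ∈ N, p e = ∑ e ∈ N, if e ∈ failed then 0 else p e :=
        sum_congr rfl fun e he => (if_neg (hNfailed e he)).symm
    _ ≤ ∑ e ∈ M, if e ∈ failed then 0 else p e := hmax N hN fun e he => (havail e he).2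
    _ = ∑ e ∈ M with e ∉ failed, p e := by simp only [sum_filter, ite_not]
    _ ≤ ∑ e ∈ newlySelected gc t ω, p e :=
        sum_le_sum_of_subset_of_nonneg hMnew fun e _ _ => hp e

variable [Fintype E]

theorem expectation_successCount_le (hgc : G.IsGreedyCommit p gc) (hp : ∀ e, 0 ≤ p e ∧ p e ≤ 1)
    {N : (E → Bool) → Finset E} (hN : IsNonanticipating N) (hmatch : ∀ ω, G.IsMatching (N ω))
    {t : ℕ} (havail : ∀ ω, ∀ e ∈ N ω, G.IsAvailable gc ω t e) :
    expectation p (successCount N) ≤ expectation p (successCount (newlySelected gc t)) := by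
  rw [hN.expectation_successCount,
    (hgc.1.isNonanticipating_newlySelected t).expectation_successCount]
  exact expectation_mono hp fun ω =>
    hgc.sum_le_sum_newlySelected (fun e => (hp e).1) (hmatch ω) (havail ω)

theorem expectation_successCount_le_add (hgc : G.IsGreedyCommit p gc)
    (hp : ∀ e, 0 ≤ p e ∧ p e ≤ 1) (halg : G.IsOnline alg) (t τ : ℕ) :
    expectation p (successCount (alg · τ)) ≤
      2 * expectation p (successCount (selectedBefore gc · t)) +
        (τ + 1 : ℕ) * expectation p (successCount (newlySelected gc t)) := by
  have hround : ∀ s, expectation p (successCount (G.availableNew gc alg t s)) ≤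
      expectation p (successCount (newlySelected gc t)) := by
    intro s
    refine hgc.expectation_successCount_le hp (hgc.1.isNonanticipating_availableNew halg t s)
      (fun ω => (halg.1 ω s).subset fun e he => ?_) fun ω e he => (mem_availableNew.mp he).2
    exact sdiff_subset (mem_availableNew.mp he).1
  calc expectation p (successCount (alg · τ))
      ≤ expectation p ((2 : ℝ) • successCount (selectedBefore gc · t) +
          ∑ s ∈ range (τ + 1), successCount (G.availableNew gc alg t s)) :=
        expectation_mono hp (halg.successCount_le gc t τ)
    _ = 2 * expectation p (successCount (selectedBefore gc · t)) +
          ∑ s ∈ range (τ + 1), expectation p (successCount (G.availableNew gc alg t s)) := by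
        rw [map_add, map_smul, map_sum, smul_eq_mul]
    _ ≤ _ := by
        gcongr
        simpa using sum_le_card_nsmul (range (τ + 1)) _ _ fun s _ => hround s

end GraphEdges.IsGreedyCommit

theorem one_sub_exp_neg_mul_le {g : ℕ → ℝ} {c x : ℝ} {n : ℕ} (hg : Monotone g) (hg0 : g 0 = 0)
    (hc : 0 ≤ c) (hx : 0 ≤ x) (hn : n ≠ 0)
    (h : ∀ t < n, x ≤ c * g t + n * (g (t + 1) - g t)) : (1 - Real.exp (-c)) * x ≤ c * g n := by
  have hn0 : (0 : ℝ) < n := Nat.cast_pos.mpr (Nat.pos_of_ne_zero hn)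
  rcases le_total c n with hcn | hnc
  · have hstep : ∀ t < n, x - c * g (t + 1) ≤ (1 - c / n) * (x - c * g t) := by
      intro t ht
      have hgain : (x - c * g t) / n ≤ g (t + 1) - g t := by
        rw [div_le_iff₀ hn0]
        linarith [h t ht]
      calc x - c * g (t + 1) = x - c * g t - c * (g (t + 1) - g t) := by ring
        _ ≤ x - c * g t - c * ((x - c * g t) / n) := by gcongr
        _ = (1 - c / n) * (x - c * g t) := by ring
    have hgap : x - c * g n ≤ Real.exp (-c) * x :=
      calc x - c * g n ≤ (1 - c / n) ^ n * (x - c * g 0) :=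
            le_geom (u := fun t => x - c * g t) (sub_nonneg.mpr ((div_le_one hn0).mpr hcn)) n hstep
        _ = (1 - c / n) ^ n * x := by rw [hg0, mul_zero, sub_zero]
        _ ≤ Real.exp (-c) * x := by gcongr; exact Real.one_sub_div_pow_le_exp_neg hcn
    linarith
  · -- The contraction factor is not positive here, but the first step already suffices.
    have hg1 : 0 ≤ g 1 := hg0 ▸ hg zero_le_one
    calc (1 - Real.exp (-c)) * x ≤ x :=
          mul_le_of_le_one_left hx (sub_le_self _ (Real.exp_pos _).le)
      _ ≤ n * g 1 := by simpa [hg0] using h 0 (Nat.pos_of_ne_zero hn)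
      _ ≤ c * g n := by
          gcongr
          exact hg (Nat.one_le_iff_ne_zero.mpr hn)

theorem GraphEdges.IsGreedyCommit.one_sub_exp_neg_two_mul_expectation_le [Fintype E]
    [DecidableEq E] {G : GraphEdges V E} {p : E → ℝ} {gc alg : (E → Bool) → ℕ → Finset E}
    (hgc : G.IsGreedyCommit p gc) (hp : ∀ e, 0 ≤ p e ∧ p e ≤ 1) (halg : G.IsOnline alg) (τ : ℕ) :
    (1 - Real.exp (-2)) * expectation p (successCount (alg · τ)) ≤
      2 * expectation p (successCount (gc · τ)) := by
  let g : ℕ → ℝ := fun t => expectation p (successCount (selectedBefore gc · t))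
  have hgsucc : ∀ t, g (t + 1) = g t + expectation p (successCount (newlySelected gc t)) := by
    intro t
    simp only [g, successCount_selectedBefore_succ, map_add]
  have hgmono : Monotone g := monotone_nat_of_le_succ fun t =>
    hgsucc t ▸ le_add_of_nonneg_right (expectation_nonneg hp (successCount_nonneg _))
  have hg0 : g 0 = 0 := by simp [g, expectation_apply, successCount, selectedBefore]
  rw [hgc.successCount_eq]
  refine one_sub_exp_neg_mul_le hgmono hg0 zero_le_two
    (expectation_nonneg hp (successCount_nonneg _)) τ.succ_ne_zero fun t _ => ?_
  rw [hgsucc, add_sub_cancel_left]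
  exact hgc.expectation_successCount_le_add hp halg t τ

theorem exp_neg_two_lt : Real.exp (-2) < 0.14 := by
  calc Real.exp (-2) = Real.exp (-1) ^ 2 := by rw [← Real.exp_nat_mul]; norm_num
    _ < 0.37 ^ 2 := by gcongr; exact Real.exp_neg_one_lt_d9.trans (by norm_num)
    _ < 0.14 := by norm_num

theorem expectedReward_eq_sum [Fintype E] [DecidableEq E] (p : E → ℝ) (w : ℕ → ℝ) (T : ℕ)
    (select : (E → Bool) → ℕ → Finset E) :
    expectedReward p w T select =
      ∑ t ∈ range T, w t * expectation p (successCount (select · t)) := by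
  simp only [expectedReward, expectation_apply, successCount, mul_sum]
  rw [sum_comm]
  exact sum_congr rfl fun t _ => sum_congr rfl fun ω _ => mul_left_comm _ _ _

/-- Every Greedy-Commit process is a `0.43`-approximation to
every online algorithm, for any nonnegative round weights. -/
theorem greedyCommit_approximates_opt
    {V E : Type} [DecidableEq V] [Fintype E] [DecidableEq E]
    (G : GraphEdges V E) (p : E → ℝ) (hp : ∀ e, 0 ≤ p e ∧ p e ≤ 1)
    (T : ℕ) (w : ℕ → ℝ) (hw : ∀ t, 0 ≤ w t)
    (gc alg : (E → Bool) → ℕ → Finset E)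
    (hgc : G.IsGreedyCommit p gc) (halg : G.IsOnline alg) :
    0.43 * expectedReward p w T alg ≤ expectedReward p w T gc := by
  have hround : ∀ t, 0.43 * expectation p (successCount (alg · t)) ≤
      expectation p (successCount (gc · t)) := by
    intro t
    have halg0 : 0 ≤ expectation p (successCount (alg · t)) :=
      expectation_nonneg hp (successCount_nonneg _)
    have hgcalg := hgc.one_sub_exp_neg_two_mul_expectation_le hp halg t
    nlinarith [mul_le_mul_of_nonneg_right exp_neg_two_lt.le halg0]
  rw [expectedReward_eq_sum, expectedReward_eq_sum, mul_sum]
  refine sum_le_sum fun t _ => ?_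
  rw [mul_left_comm]
  exact mul_le_mul_of_nonneg_left (hround t) (hw t)
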